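/- Energy estimate for the lattice heat equation: let u(t) solve du/dt = Δu on ℤ² with u(0) = φ ∈ l²(ℤ²), where Δ is the unit-weight graph Laplacian. Then for all t ≥ 0: ‖u(t)‖_{l²}² + (1+t) N_{1,2}²(u(t)) + ∫₀ᵗ N_{1,2}²(u(τ)) dτ + ∫₀ᵗ (1+τ) N_{2,2}²(u(τ)) dτ ≤ (2 + C₁) ‖φ‖_{l²}², where C₁ is a universal constant such that N_{1,2}²(v) ≤ C₁‖v‖_{l²}² for all v ∈ l²(ℤ²). -/

import Mathlib

/-- The four lattice directions on ℤ². -/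
def latDir : Fin 4 → ℤ × ℤ := ![(1, 0), (0, 1), (-1, 0), (0, -1)]

/-- The basic difference operators D₁,…,D₄ on ℤ². -/
def Dop (i : Fin 4) (u : ℤ × ℤ → ℝ) (p : ℤ × ℤ) : ℝ := u (p + latDir i) - u p

/-- The unit-weight graph Laplacian on ℤ². -/
def latLap (u : ℤ × ℤ → ℝ) (p : ℤ × ℤ) : ℝ := ∑ i : Fin 4, Dop i u p

/-- The squared first-order seminorm N_{1,2}²(u) = ∑_i ‖D_i u‖². -/
noncomputable def N12sq (u : ℤ × ℤ → ℝ) : ℝ :=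
  ∑ i : Fin 4, ∑' p : ℤ × ℤ, (Dop i u p) ^ 2

/-- The squared second-order seminorm N_{2,2}²(u) = ∑_{i,j} ‖D_i D_j u‖². -/
noncomputable def N22sq (u : ℤ × ℤ → ℝ) : ℝ :=
  ∑ i : Fin 4, ∑ j : Fin 4, ∑' p : ℤ × ℤ, (Dop i (Dop j u) p) ^ 2

/-!
A difference operator is `D = T - 1` with `T` a translation, an isometry of `ℓ²`. Expanding
`‖u + D u‖² = ‖u‖²` gives `2⟪u, D u⟫ = -‖D u‖²`; summing over the directions yields
`d/dt ‖u‖² = -N₁₂²(u)`, and since the operators commute, the same identity for each `D_j u` yields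
`d/dt N₁₂²(u) = -N₂₂²(u)`. Hence `d/dt (‖u‖² + (1 + t) N₁₂²(u)) = -(1 + t) N₂₂²(u)`, and integrating
this together with the first identity gives the estimate.

The hypotheses only provide pointwise time derivatives, and an `ℓ²` norm finite at each time but not
known to be locally bounded, whereas the energy computation needs `u` to be differentiable in `ℓ²`.
Where `u` is locally bounded, testing against finitely supported vectors makes it Lipschitz and
then differentiable. Suppose the closed set of times where local boundedness fails is nonempty. The
norm is lower semicontinuous, so by Baire's theorem it is bounded on a relatively open piece of
that set. Across each gap of the set, the equation controls the norm by its value at an endpoint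
of the gap, so `u` is bounded near a bad time, a contradiction.
-/

open Set Filter Topology
open scoped ENNReal NNReal RealInnerProductSpace

section Topology

variable {X : Type*} [TopologicalSpace X] {f : X → ℝ}

theorem bddAbove_image_of_isBoundedUnder {s : Set X} (hs : IsCompact s)
    (hf : ∀ x ∈ s, IsBoundedUnder (· ≤ ·) (𝓝[s] x) f) : BddAbove (f '' s) := by
  refine hs.induction_on (p := fun t => BddAbove (f '' t)) (by simp)
    (fun t t' htt' ht' => ht'.mono (image_mono htt'))
    (fun t t' ht ht' => by rw [image_union]; exact ht.union ht') fun x hx => ?_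
  obtain ⟨M, hM⟩ := hf x hx
  exact ⟨{y | f y ≤ M}, hM, M, forall_mem_image.2 fun y hy => hy⟩

theorem exists_isBoundedUnder_of_lowerSemicontinuous [BaireSpace X] [Nonempty X]
    (hf : LowerSemicontinuous f) : ∃ x, IsBoundedUnder (· ≤ ·) (𝓝 x) f := by
  obtain ⟨n, x, hx⟩ := nonempty_interior_of_iUnion_of_closed
    (fun n : ℕ => hf.isClosed_preimage (n : ℝ))
    (iUnion_eq_univ_iff.2 fun x => exists_nat_ge (f x))
  exact ⟨x, n, mem_interior_iff_mem_nhds.1 hx⟩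

theorem exists_isBoundedUnder_of_lowerSemicontinuousOn {s : Set X} [BaireSpace s]
    (hs : s.Nonempty) (hf : LowerSemicontinuousOn f s) :
    ∃ x ∈ s, IsBoundedUnder (· ≤ ·) (𝓝[s] x) f := by
  have := hs.to_subtype
  obtain ⟨x, hx⟩ :=
    exists_isBoundedUnder_of_lowerSemicontinuous (lowerSemicontinuous_restrict_iff.2 hf)
  refine ⟨x, x.2, ?_⟩
  rwa [nhdsWithin_eq_map_subtype_coe x.2]

theorem isOpen_setOf_isBoundedUnder_nhdsWithin (f : X → ℝ) (s : Set X) :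
    IsOpen {x | IsBoundedUnder (· ≤ ·) (𝓝[s] x) f} := by
  refine isOpen_iff_mem_nhds.2 fun x ⟨M, hM⟩ => ?_
  filter_upwards [eventually_eventually_nhds.2 (eventually_nhdsWithin_iff.1 hM)] with y hy
  exact ⟨M, eventually_nhdsWithin_iff.2 hy⟩

theorem eventually_forall_mem_uIcc {S : Set ℝ} [S.OrdConnected] {t : ℝ} (ht : t ∈ S)
    {p : ℝ → Prop} (hp : ∀ᶠ s in 𝓝[S] t, p s) : ∀ᶠ s in 𝓝[S] t, ∀ r ∈ uIcc t s, p r :=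
  ((tendsto_const_pure.mono_right (pure_le_nhdsWithin ht)).uIcc tendsto_id).eventually
    (eventually_smallSets_forall.2 hp)

theorem exists_mem_uIcc_forall_mem_uIcc_eq {B : Set ℝ} (hB : IsClosed B) {a s : ℝ} (ha : a ∈ B) :
    ∃ c ∈ B, c ∈ uIcc a s ∧ ∀ r ∈ uIcc c s, r ∈ B → r = c := by
  obtain ⟨c, ⟨hca, hcB⟩, hmin⟩ := (isCompact_uIcc.inter_right hB).exists_isMinOn
    ⟨a, left_mem_uIcc, ha⟩ (f := (|s - ·|)) (by fun_prop)
  refine ⟨c, hcB, hca, fun r hr hrB => ?_⟩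
  have hle : |s - c| ≤ |s - r| :=
    hmin ⟨uIcc_subset_uIcc hca right_mem_uIcc hr, hrB⟩
  rcases le_total c s with hcs | hcs
  · rw [uIcc_of_le hcs] at hr
    rw [abs_of_nonneg (sub_nonneg.2 hcs), abs_of_nonneg (sub_nonneg.2 hr.2)] at hle
    linarith [hr.1]
  · rw [uIcc_of_ge hcs] at hr
    rw [abs_of_nonpos (sub_nonpos.2 hcs), abs_of_nonpos (sub_nonpos.2 hr.1)] at hle
    linarith [hr.2]

end Topology

section WeakDerivative

variable {E : Type*} [NormedAddCommGroup E] [InnerProductSpace ℝ E]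

theorem norm_le_of_forall_abs_inner_le {K : Set E} (hK : Dense K) {x : E} {C : ℝ} (hC : 0 ≤ C)
    (h : ∀ y ∈ K, |⟪y, x⟫| ≤ C * ‖y‖) : ‖x‖ ≤ C := by
  have hclosed : IsClosed {y : E | |⟪y, x⟫| ≤ C * ‖y‖} :=
    isClosed_le (by fun_prop) (by fun_prop)
  have hx : |⟪x, x⟫| ≤ C * ‖x‖ := hclosed.closure_subset_iff.2 h (hK x)
  rw [real_inner_self_eq_norm_sq, abs_sq, sq] at hx
  rcases (norm_nonneg x).eq_or_lt with h0 | h0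
  · exact h0 ▸ hC
  · exact le_of_mul_le_mul_right hx h0

/-- `W` is the weak derivative of `U` on `S`, tested against the vectors of `D`. No regularity of
`U` in the norm of `E` is asked for, not even local boundedness. -/
def HasWeakDerivOn (D : Set E) (U W : ℝ → E) (S : Set ℝ) : Prop :=
  ∀ y ∈ D, ∀ t ∈ S, HasDerivWithinAt (fun s => ⟪y, U s⟫) ⟪y, W t⟫ S t

namespace HasWeakDerivOn

variable {K : Set E} {U W : ℝ → E} {S : Set ℝ}

protected theorem span (h : HasWeakDerivOn K U W S) :
    HasWeakDerivOn (Submodule.span ℝ K) U W S := by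
  intro y hy t ht
  induction hy using Submodule.span_induction with
  | mem y hy => exact h y hy t ht
  | zero => simpa only [inner_zero_left] using hasDerivWithinAt_const t S (0 : ℝ)
  | add y z _ _ hy hz => simpa only [inner_add_left] using hy.fun_add hz
  | smul a y _ hy => simpa only [real_inner_smul_left] using hy.const_mul a

theorem norm_sub_sub_smul_le (h : HasWeakDerivOn K U W S) (hK : Dense K) {s t : ℝ}
    (hst : uIcc s t ⊆ S) {a : E} {C : ℝ} (hC : ∀ r ∈ uIcc s t, ‖W r - a‖ ≤ C) :
    ‖U t - U s - (t - s) • a‖ ≤ C * |t - s| := by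
  have hC0 : 0 ≤ C := (norm_nonneg _).trans (hC s left_mem_uIcc)
  refine norm_le_of_forall_abs_inner_le hK (by positivity) fun y hy => ?_
  have hderiv : ∀ r ∈ uIcc s t,
      HasDerivWithinAt (fun r => ⟪y, U r⟫ - r * ⟪y, a⟫) ⟪y, W r - a⟫ (uIcc s t) r := fun r hr => by
    simpa only [inner_sub_right, one_mul, id] using
      ((h y hy r (hst hr)).mono hst).fun_sub ((hasDerivWithinAt_id r _).mul_const ⟪y, a⟫)
  have hbound : ∀ r ∈ uIcc s t, ‖⟪y, W r - a⟫‖ ≤ ‖y‖ * C := fun r hr =>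
    (norm_inner_le_norm y _).trans (by gcongr; exact hC r hr)
  have hmvt := (convex_uIcc s t).norm_image_sub_le_of_norm_hasDerivWithin_le hderiv hbound
    left_mem_uIcc right_mem_uIcc
  rw [Real.norm_eq_abs, Real.norm_eq_abs] at hmvt
  calc |⟪y, U t - U s - (t - s) • a⟫|
      = |⟪y, U t⟫ - t * ⟪y, a⟫ - (⟪y, U s⟫ - s * ⟪y, a⟫)| := by
        simp only [inner_sub_right, real_inner_smul_right]
        ring_nf
    _ ≤ ‖y‖ * C * |t - s| := hmvt
    _ = C * |t - s| * ‖y‖ := by ring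

theorem norm_sub_le (h : HasWeakDerivOn K U W S) (hK : Dense K) {s t : ℝ} (hst : uIcc s t ⊆ S)
    {C : ℝ} (hC : ∀ r ∈ uIcc s t, ‖W r‖ ≤ C) : ‖U t - U s‖ ≤ C * |t - s| := by
  simpa only [smul_zero, sub_zero] using
    h.norm_sub_sub_smul_le hK hst (a := 0) (by simpa only [sub_zero] using hC)

theorem continuousWithinAt [hS : S.OrdConnected] (h : HasWeakDerivOn K U W S) (hK : Dense K) {t : ℝ}
    (ht : t ∈ S) (hW : IsBoundedUnder (· ≤ ·) (𝓝[S] t) (‖W ·‖)) : ContinuousWithinAt U S t := by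
  obtain ⟨M, hM⟩ := hW
  have hlip : ∀ᶠ s in 𝓝[S] t, ‖U s - U t‖ ≤ M * |s - t| := by
    filter_upwards [eventually_forall_mem_uIcc ht hM, self_mem_nhdsWithin] with s hs hsS
    exact h.norm_sub_le hK (hS.uIcc_subset ht hsS) hs
  have hlim : Tendsto (fun s => M * |s - t|) (𝓝[S] t) (𝓝 0) :=
    tendsto_nhdsWithin_of_tendsto_nhds <| Continuous.tendsto' (by fun_prop) _ _ (by simp)
  exact tendsto_iff_norm_sub_tendsto_zero.2 <|
    squeeze_zero' (Eventually.of_forall fun _ => norm_nonneg _) hlip hlim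

theorem hasDerivWithinAt [hS : S.OrdConnected] (h : HasWeakDerivOn K U W S) (hK : Dense K) {t : ℝ}
    (ht : t ∈ S) (hW : ContinuousWithinAt W S t) : HasDerivWithinAt U (W t) S t := by
  refine hasDerivWithinAt_iff_isLittleO.2 <| Asymptotics.isLittleO_iff.2 fun ε hε => ?_
  have hclose : ∀ᶠ s in 𝓝[S] t, ‖W s - W t‖ ≤ ε :=
    (tendsto_iff_norm_sub_tendsto_zero.1 hW).eventually (eventually_le_nhds hε)
  filter_upwards [eventually_forall_mem_uIcc ht hclose, self_mem_nhdsWithin] with s hs hsS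
  exact h.norm_sub_sub_smul_le hK (hS.uIcc_subset ht hsS) hs

theorem lowerSemicontinuousOn_norm (h : HasWeakDerivOn K U W S) (hK : Dense K) :
    LowerSemicontinuousOn (‖U ·‖) S := by
  intro t ht a ha
  rcases lt_or_ge a 0 with ha0 | ha0
  · exact Eventually.of_forall fun s => ha0.trans_le (norm_nonneg _)
  obtain ⟨y, hy, hya⟩ : ∃ y ∈ K, a * ‖y‖ < |⟪y, U t⟫| := by
    by_contra! hle
    exact ha.not_ge (norm_le_of_forall_abs_inner_le hK ha0 hle)
  filter_upwards [(h y hy t ht).continuousWithinAt.abs.eventually (lt_mem_nhds hya)] with s hs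
  refine lt_of_mul_lt_mul_right (hs.trans_le ?_) (norm_nonneg y)
  rw [mul_comm]
  exact abs_real_inner_le_norm y (U s)

end HasWeakDerivOn

section LinearGrowth

variable {K : Set E} {U : ℝ → E} {S : Set ℝ} {v : E → E} {L : ℝ≥0}

theorem norm_le_one_add_two_mul_of_bddAbove (hU : HasWeakDerivOn K U (v ∘ U) S) (hK : Dense K)
    (hL : ∀ x, ‖v x‖ ≤ L * (1 + ‖x‖)) {c s : ℝ} (hcs : uIcc c s ⊆ S) (hsmall : L * |s - c| ≤ 1 / 2)
    (hbdd : BddAbove ((‖U ·‖) '' uIcc c s)) : ∀ r ∈ uIcc c s, ‖U r‖ ≤ 1 + 2 * ‖U c‖ := by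
  obtain ⟨M, hM⟩ := Real.exists_isLUB (nonempty_uIcc.image _) hbdd
  have hUM : ∀ r ∈ uIcc c s, ‖U r‖ ≤ M := fun r hr => hM.1 (mem_image_of_mem _ hr)
  have hself : ∀ r ∈ uIcc c s, ‖U r‖ ≤ ‖U c‖ + (1 + M) / 2 := fun r hr => by
    have hsub : uIcc c r ⊆ uIcc c s := uIcc_subset_uIcc_left hr
    have hlip : ‖U r - U c‖ ≤ L * (1 + M) * |r - c| :=
      hU.norm_sub_le hK (hsub.trans hcs) fun q hq =>
        (hL (U q)).trans (by gcongr; exact hUM q (hsub hq))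
    have hM0 : 0 ≤ M := (norm_nonneg _).trans (hUM r hr)
    have hrc : L * |r - c| ≤ 1 / 2 :=
      (mul_le_mul_of_nonneg_left (abs_sub_left_of_mem_uIcc hr) L.coe_nonneg).trans hsmall
    have htri : ‖U r‖ ≤ ‖U c‖ + ‖U r - U c‖ := norm_le_insert' _ _
    nlinarith
  have hM' : M ≤ ‖U c‖ + (1 + M) / 2 := hM.2 (forall_mem_image.2 hself)
  exact fun r hr => (hUM r hr).trans (by linarith)

theorem norm_le_one_add_two_mul_of_isBoundedUnder (hU : HasWeakDerivOn K U (v ∘ U) S) (hK : Dense K)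
    (hL : ∀ x, ‖v x‖ ≤ L * (1 + ‖x‖)) {c s : ℝ} (hcs : uIcc c s ⊆ S) (hsmall : L * |s - c| ≤ 1 / 2)
    (hloc : ∀ r ∈ uIcc c s, r ≠ c → IsBoundedUnder (· ≤ ·) (𝓝[S] r) (‖U ·‖)) :
    ‖U s‖ ≤ 1 + 2 * ‖U c‖ := by
  -- Running the a priori bound from `s` towards `c` makes it uniform up to `c`.
  have hoff : ∀ r ∈ uIcc c s, r ≠ c → ‖U r‖ ≤ 1 + 2 * ‖U s‖ := fun r hr hrc => by
    have hsub : uIcc s r ⊆ uIcc c s := uIcc_subset_uIcc right_mem_uIcc hr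
    have hbdd : BddAbove ((‖U ·‖) '' uIcc s r) :=
      bddAbove_image_of_isBoundedUnder isCompact_uIcc fun q hq => by
        refine (hloc q (hsub hq) ?_).mono (nhdsWithin_mono q (hsub.trans hcs))
        rintro rfl
        exact hrc (eq_of_mem_uIcc_of_mem_uIcc (uIcc_comm q s ▸ hr) (uIcc_comm s r ▸ hq))
    refine norm_le_one_add_two_mul_of_bddAbove hU hK hL (hsub.trans hcs) ?_ hbdd r right_mem_uIcc
    refine (mul_le_mul_of_nonneg_left ?_ L.coe_nonneg).trans hsmall
    rw [abs_sub_comm r]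
    exact abs_sub_right_of_mem_uIcc hr
  have hbdd : BddAbove ((‖U ·‖) '' uIcc c s) := by
    refine ⟨max ‖U c‖ (1 + 2 * ‖U s‖), forall_mem_image.2 fun r hr => ?_⟩
    rcases eq_or_ne r c with rfl | hrc
    · exact le_max_left _ _
    · exact (hoff r hr hrc).trans (le_max_right _ _)
  exact norm_le_one_add_two_mul_of_bddAbove hU hK hL hcs hsmall hbdd s right_mem_uIcc

theorem isBoundedUnder_norm_of_hasWeakDerivOn [hS : S.OrdConnected] (hSc : IsClosed S)
    (hU : HasWeakDerivOn K U (v ∘ U) S) (hK : Dense K) (hL : ∀ x, ‖v x‖ ≤ L * (1 + ‖x‖)) (t : ℝ) :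
    IsBoundedUnder (· ≤ ·) (𝓝[S] t) (‖U ·‖) := by
  set B : Set ℝ := {t | ¬ IsBoundedUnder (· ≤ ·) (𝓝[S] t) (‖U ·‖)}
  by_contra hbad
  have hBc : IsClosed B := (isOpen_setOf_isBoundedUnder_nhdsWithin _ S).isClosed_compl
  have hBS : B ⊆ S := fun r hr => by
    by_contra hrS
    refine hr ?_
    rw [notMem_closure_iff_nhdsWithin_eq_bot.1 (hSc.closure_eq.symm ▸ hrS)]
    exact isBoundedUnder_of_eventually_le (a := 0) eventually_bot
  have := hBc.completeSpace_coe
  obtain ⟨t₀, ht₀, M, hM⟩ := exists_isBoundedUnder_of_lowerSemicontinuousOn ⟨t, hbad⟩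
    ((hU.lowerSemicontinuousOn_norm hK).mono hBS)
  refine ht₀ ⟨1 + 2 * M, eventually_map.2 ?_⟩
  have hBM : ∀ᶠ s in 𝓝[S] t₀, s ∈ B → ‖U s‖ ≤ M :=
    (eventually_nhdsWithin_iff.1 hM).filter_mono nhdsWithin_le_nhds
  have hnear : ∀ᶠ s in 𝓝[S] t₀, L * |s - t₀| < 1 / 2 :=
    (Continuous.tendsto' (by fun_prop) t₀ 0 (by simp)).eventually_lt_const (by norm_num)
      |>.filter_mono nhdsWithin_le_nhds
  filter_upwards [eventually_forall_mem_uIcc (hBS ht₀) hBM, hnear, self_mem_nhdsWithin]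
    with s hsM hsmall hsS
  obtain ⟨c, hcB, hc, hclosest⟩ := exists_mem_uIcc_forall_mem_uIcc_eq hBc (s := s) ht₀
  have hcs : L * |s - c| ≤ 1 / 2 := (mul_le_mul_of_nonneg_left
    (abs_sub_right_of_mem_uIcc hc) L.coe_nonneg).trans hsmall.le
  have hUs : ‖U s‖ ≤ 1 + 2 * ‖U c‖ :=
    norm_le_one_add_two_mul_of_isBoundedUnder hU hK hL (hS.uIcc_subset (hBS hcB) hsS) hcs
      fun r hr hrc => by_contra fun hrB => hrc (hclosest r hr hrB)
  linarith [hsM c hc hcB]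

theorem hasDerivWithinAt_of_hasWeakDerivOn [S.OrdConnected] (hSc : IsClosed S)
    (hU : HasWeakDerivOn K U (v ∘ U) S) (hK : Dense K) (hv : Continuous v)
    (hL : ∀ x, ‖v x‖ ≤ L * (1 + ‖x‖)) {t : ℝ} (ht : t ∈ S) :
    HasDerivWithinAt U (v (U t)) S t := by
  obtain ⟨M, hM⟩ := isBoundedUnder_norm_of_hasWeakDerivOn hSc hU hK hL t
  have hW : IsBoundedUnder (· ≤ ·) (𝓝[S] t) (‖(v ∘ U) ·‖) := by
    refine ⟨L * (1 + M), ?_⟩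
    rw [eventually_map]
    filter_upwards [eventually_map.1 hM] with s hs using (hL (U s)).trans (by gcongr)
  exact hU.hasDerivWithinAt hK ht
    (hv.continuousAt.comp_continuousWithinAt (hU.continuousWithinAt hK ht hW))

end LinearGrowth

theorem hasDerivWithinAt_of_hasDerivWithinAt_repr {ι : Type*} (b : HilbertBasis ι ℝ E)
    {S : Set ℝ} [S.OrdConnected] (hS : IsClosed S) (A : E →L[ℝ] E) {U : ℝ → E}
    (hU : ∀ i, ∀ t ∈ S, HasDerivWithinAt (fun s => b.repr (U s) i) (b.repr (A (U t)) i) S t)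
    {t : ℝ} (ht : t ∈ S) : HasDerivWithinAt U (A (U t)) S t := by
  have hweak : HasWeakDerivOn (range b) U (A ∘ U) S := by
    rintro _ ⟨i, rfl⟩ t ht
    simpa only [b.repr_apply_apply, Function.comp_apply] using hU i t ht
  have hdense : Dense (Submodule.span ℝ (range b) : Set E) :=
    Submodule.dense_iff_topologicalClosure_eq_top.2 b.dense_span
  have hgrowth : ∀ x, ‖A x‖ ≤ ‖A‖₊ * (1 + ‖x‖) := fun x =>
    (A.le_opNorm x).trans (by rw [coe_nnnorm]; gcongr; linarith)
  exact hasDerivWithinAt_of_hasWeakDerivOn hS hweak.span hdense A.continuous hgrowth ht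

end WeakDerivative

section Energy

variable {E ι : Type*} [NormedAddCommGroup E] [InnerProductSpace ℝ E] [Fintype ι]

/-- The squared first-order seminorm of `x` for a family `D` of difference operators. -/
def gradNormSq (D : ι → E →L[ℝ] E) (x : E) : ℝ := ∑ i, ‖D i x‖ ^ 2

/-- The squared second-order seminorm of `x` for a family `D` of difference operators. -/
def hessNormSq (D : ι → E →L[ℝ] E) (x : E) : ℝ := ∑ i, ∑ j, ‖D i (D j x)‖ ^ 2

variable {D : ι → E →L[ℝ] E} {U : ℝ → E} {S : Set ℝ} {t : ℝ}

theorem continuous_gradNormSq (D : ι → E →L[ℝ] E) : Continuous (gradNormSq D) := by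
  unfold gradNormSq
  fun_prop

theorem continuous_hessNormSq (D : ι → E →L[ℝ] E) : Continuous (hessNormSq D) := by
  unfold hessNormSq
  fun_prop

theorem hessNormSq_eq_sum_gradNormSq (D : ι → E →L[ℝ] E) (x : E) :
    hessNormSq D x = ∑ j, gradNormSq D (D j x) :=
  Finset.sum_comm

theorem two_mul_inner_eq_neg_norm_sq {x y : E} (h : ‖x + y‖ = ‖x‖) :
    2 * ⟪x, y⟫ = -‖y‖ ^ 2 := by
  have := norm_add_sq_real x y
  rw [h] at this
  linarith

theorem two_mul_inner_sum_apply (hD : ∀ i x, ‖x + D i x‖ = ‖x‖) (x : E) :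
    2 * ⟪x, (∑ i, D i) x⟫ = -gradNormSq D x := by
  simp only [sum_apply, inner_sum, Finset.mul_sum, gradNormSq,
    two_mul_inner_eq_neg_norm_sq (hD _ x), Finset.sum_neg_distrib]

theorem hasDerivWithinAt_norm_sq (hD : ∀ i x, ‖x + D i x‖ = ‖x‖)
    (hU : HasDerivWithinAt U ((∑ i, D i) (U t)) S t) :
    HasDerivWithinAt (fun s => ‖U s‖ ^ 2) (-gradNormSq D (U t)) S t :=
  two_mul_inner_sum_apply hD (U t) ▸ hU.norm_sq

theorem hasDerivWithinAt_gradNormSq (hD : ∀ i x, ‖x + D i x‖ = ‖x‖)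
    (hcomm : ∀ i j, Commute (D i) (D j)) (hU : HasDerivWithinAt U ((∑ i, D i) (U t)) S t) :
    HasDerivWithinAt (fun s => gradNormSq D (U s)) (-hessNormSq D (U t)) S t := by
  rw [hessNormSq_eq_sum_gradNormSq, ← Finset.sum_neg_distrib]
  refine HasDerivWithinAt.fun_sum fun j _ => hasDerivWithinAt_norm_sq hD ?_
  have hDj : Commute (D j) (∑ i, D i) := Commute.sum_right _ _ _ fun i _ => hcomm j i
  have hswap : D j ((∑ i, D i) (U t)) = (∑ i, D i) (D j (U t)) := DFunLike.congr_fun hDj (U t)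
  exact hswap ▸ (D j).hasFDerivAt.comp_hasDerivWithinAt t hU

theorem intervalIntegral_eq_sub_of_hasDerivWithinAt_Ici {f f' : ℝ → ℝ} {a b : ℝ} (hab : a ≤ b)
    (hf : ∀ x ∈ Ici a, HasDerivWithinAt f (f' x) (Ici a) x) (hf' : ContinuousOn f' (Ici a)) :
    ∫ x in a..b, f' x = f b - f a :=
  intervalIntegral.integral_eq_sub_of_hasDeriv_right_of_le hab
    (fun x hx => (hf x hx.1).continuousWithinAt.mono Icc_subset_Ici_self)
    (fun x hx => (hf x hx.1.le).mono (Ioi_subset_Ici hx.1.le))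
    ((hf'.mono Icc_subset_Ici_self).intervalIntegrable_of_Icc hab)

theorem energy_identity (hD : ∀ i x, ‖x + D i x‖ = ‖x‖) (hcomm : ∀ i j, Commute (D i) (D j))
    (hU : ∀ t ∈ Ici (0 : ℝ), HasDerivWithinAt U ((∑ i, D i) (U t)) (Ici 0) t) (ht : 0 ≤ t) :
    ‖U t‖ ^ 2 + (1 + t) * gradNormSq D (U t) + (∫ τ in (0 : ℝ)..t, gradNormSq D (U τ)) +
        (∫ τ in (0 : ℝ)..t, (1 + τ) * hessNormSq D (U τ)) =
      2 * ‖U 0‖ ^ 2 + gradNormSq D (U 0) - ‖U t‖ ^ 2 := by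
  have hUc : ContinuousOn U (Ici 0) := fun τ hτ => (hU τ hτ).continuousWithinAt
  have hgrad : ContinuousOn (fun τ => -gradNormSq D (U τ)) (Ici 0) :=
    ((continuous_gradNormSq D).comp_continuousOn hUc).neg
  have hhess : ContinuousOn (fun τ => -((1 + τ) * hessNormSq D (U τ))) (Ici 0) :=
    (ContinuousOn.mul (by fun_prop) ((continuous_hessNormSq D).comp_continuousOn hUc)).neg
  have hfirst := intervalIntegral_eq_sub_of_hasDerivWithinAt_Ici ht
    (fun τ hτ => hasDerivWithinAt_norm_sq hD (hU τ hτ)) hgrad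
  have hweighted : ∀ τ ∈ Ici (0 : ℝ), HasDerivWithinAt
      (fun τ => ‖U τ‖ ^ 2 + (1 + τ) * gradNormSq D (U τ)) (-((1 + τ) * hessNormSq D (U τ)))
      (Ici 0) τ := fun τ hτ => by
    refine ((hasDerivWithinAt_norm_sq hD (hU τ hτ)).fun_add
      (((hasDerivWithinAt_id τ _).const_add 1).fun_mul
        (hasDerivWithinAt_gradNormSq hD hcomm (hU τ hτ)))).congr_deriv ?_
    simp only [id]
    ring
  have hsecond := intervalIntegral_eq_sub_of_hasDerivWithinAt_Ici ht hweighted hhess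
  rw [intervalIntegral.integral_neg] at hfirst hsecond
  linarith

end Energy

section L2

variable {α β : Type*}

theorem l2_norm_sq_eq_tsum (f : lp (fun _ : α => ℝ) 2) : ‖f‖ ^ 2 = ∑' p, f p ^ 2 := by
  simpa using lp.norm_rpow_eq_tsum (by simp) f

theorem memℓp_comp_equiv {p : ℝ≥0∞} (hp : 0 < p.toReal) (e : α ≃ β)
    {F : Type*} [NormedAddCommGroup F] {f : β → F} (hf : Memℓp f p) : Memℓp (f ∘ e) p :=
  memℓp_gen <| e.summable_iff (f := fun b => ‖f b‖ ^ p.toReal) |>.2 <| hf.summable hp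

/-- Composition with a bijection, as an isometry between `ℓ²` spaces. -/
noncomputable def l2CompEquiv (e : α ≃ β) :
    lp (fun _ : β => ℝ) 2 →ₗᵢ[ℝ] lp (fun _ : α => ℝ) 2 where
  toFun f := ⟨f ∘ e, memℓp_comp_equiv (by simp) e (lp.memℓp f)⟩
  map_add' _ _ := rfl
  map_smul' _ _ := rfl
  norm_map' f := by
    refine (pow_left_inj₀ (norm_nonneg _) (norm_nonneg _) two_ne_zero).1 ?_
    rw [l2_norm_sq_eq_tsum, l2_norm_sq_eq_tsum]
    exact e.tsum_eq fun p => f p ^ 2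

theorem hasDerivWithinAt_l2_of_apply {S : Set ℝ} [S.OrdConnected] (hS : IsClosed S)
    (A : lp (fun _ : α => ℝ) 2 →L[ℝ] lp (fun _ : α => ℝ) 2) {U : ℝ → lp (fun _ : α => ℝ) 2}
    (hU : ∀ p, ∀ t ∈ S, HasDerivWithinAt (fun s => U s p) (A (U t) p) S t) {t : ℝ} (ht : t ∈ S) :
    HasDerivWithinAt U (A (U t)) S t :=
  hasDerivWithinAt_of_hasDerivWithinAt_repr
    (HilbertBasis.ofRepr (LinearIsometryEquiv.refl ℝ (lp (fun _ : α => ℝ) 2))) hS A hU ht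

end L2

section Group

variable {G ι : Type*} [AddGroup G] [Fintype ι]

/-- The difference operator in direction `a` on functions on `G`. -/
def shiftDiff (a : G) (u : G → ℝ) (p : G) : ℝ := u (p + a) - u p

/-- The squared first-order seminorm `∑ i, ‖D_i u‖²`, with `D_i` the difference operator in
direction `d i`. -/
noncomputable def gradSeminormSq (d : ι → G) (u : G → ℝ) : ℝ :=
  ∑ i, ∑' p, shiftDiff (d i) u p ^ 2

/-- The squared second-order seminorm `∑ i, ∑ j, ‖D_i D_j u‖²`, with `D_i` the difference operator
in direction `d i`. -/
noncomputable def hessSeminormSq (d : ι → G) (u : G → ℝ) : ℝ :=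
  ∑ i, ∑ j, ∑' p, shiftDiff (d i) (shiftDiff (d j) u) p ^ 2

/-- The difference operator in direction `a`, as a bounded operator on `ℓ²(G)`. -/
noncomputable def l2Diff (a : G) : lp (fun _ : G => ℝ) 2 →L[ℝ] lp (fun _ : G => ℝ) 2 :=
  (l2CompEquiv (Equiv.addRight a)).toContinuousLinearMap - 1

theorem coe_l2Diff (a : G) (f : lp (fun _ : G => ℝ) 2) : ⇑(l2Diff a f) = shiftDiff a f := rfl

theorem norm_add_l2Diff (a : G) (f : lp (fun _ : G => ℝ) 2) : ‖f + l2Diff a f‖ = ‖f‖ := by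
  simp [l2Diff]

theorem l2Diff_commute {G : Type*} [AddCommGroup G] (a b : G) : Commute (l2Diff a) (l2Diff b) := by
  ext f p
  simp only [mul_apply_eq_comp, coe_l2Diff, shiftDiff, add_right_comm p a b]
  ring

theorem coe_sum_l2Diff_apply (d : ι → G) (f : lp (fun _ : G => ℝ) 2) (p : G) :
    (∑ i, l2Diff (d i)) f p = ∑ i, shiftDiff (d i) f p := by
  simp only [sum_apply, lp.coeFn_sum, Finset.sum_apply, coe_l2Diff]

theorem gradNormSq_l2Diff (d : ι → G) (f : lp (fun _ : G => ℝ) 2) :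
    gradNormSq (fun i => l2Diff (d i)) f = gradSeminormSq d f := by
  simp only [gradNormSq, gradSeminormSq, l2_norm_sq_eq_tsum, coe_l2Diff]

theorem hessNormSq_l2Diff (d : ι → G) (f : lp (fun _ : G => ℝ) 2) :
    hessNormSq (fun i => l2Diff (d i)) f = hessSeminormSq d f := by
  simp only [hessNormSq, hessSeminormSq, l2_norm_sq_eq_tsum, coe_l2Diff]

theorem stmt12_general {G : Type*} [AddCommGroup G] (d : ι → G) (u : ℝ → G → ℝ)
    (hu2 : ∀ t : ℝ, 0 ≤ t → Memℓp (u t) 2)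
    (hheat : ∀ p : G, ∀ t : ℝ, 0 ≤ t →
      HasDerivWithinAt (fun s => u s p) (∑ i, shiftDiff (d i) (u t) p) (Ici 0) t)
    {t : ℝ} (ht : 0 ≤ t) :
    (∑' p, u t p ^ 2) + (1 + t) * gradSeminormSq d (u t) +
        (∫ τ in (0 : ℝ)..t, gradSeminormSq d (u τ)) +
        (∫ τ in (0 : ℝ)..t, (1 + τ) * hessSeminormSq d (u τ)) =
      2 * (∑' p, u 0 p ^ 2) + gradSeminormSq d (u 0) - ∑' p, u t p ^ 2 := by
  obtain ⟨U, hUu⟩ : ∃ U : ℝ → lp (fun _ : G => ℝ) 2, ∀ s, 0 ≤ s → ⇑(U s) = u s :=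
    ⟨fun s => ⟨u (max s 0), hu2 _ (le_max_right s 0)⟩, fun s hs => congrArg u (max_eq_left hs)⟩
  have hU : ∀ s ∈ Ici (0 : ℝ), HasDerivWithinAt U ((∑ i, l2Diff (d i)) (U s)) (Ici 0) s := by
    refine fun s hs => hasDerivWithinAt_l2_of_apply isClosed_Ici _ (fun p r hr => ?_) hs
    rw [coe_sum_l2Diff_apply, hUu r hr]
    exact (hheat p r hr).congr (fun q hq => congrFun (hUu q hq) p) (congrFun (hUu r hr) p)
  have hgrad : ∫ τ in (0 : ℝ)..t, gradSeminormSq d (u τ) =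
      ∫ τ in (0 : ℝ)..t, gradSeminormSq d (U τ) :=
    intervalIntegral.integral_congr fun τ hτ => by
      simp only [hUu τ (uIcc_of_le ht ▸ hτ).1]
  have hhess : ∫ τ in (0 : ℝ)..t, (1 + τ) * hessSeminormSq d (u τ) =
      ∫ τ in (0 : ℝ)..t, (1 + τ) * hessSeminormSq d (U τ) :=
    intervalIntegral.integral_congr fun τ hτ => by
      simp only [hUu τ (uIcc_of_le ht ▸ hτ).1]
  have henergy := energy_identity (fun i => norm_add_l2Diff (d i))
    (fun i j => l2Diff_commute (d i) (d j)) hU ht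
  simp only [gradNormSq_l2Diff, hessNormSq_l2Diff, l2_norm_sq_eq_tsum] at henergy
  rw [hgrad, hhess, ← hUu t ht, ← hUu 0 le_rfl]
  exact henergy

end Group

/-- Energy estimate for the lattice heat equation on ℤ². -/
theorem stmt12 (u : ℝ → ℤ × ℤ → ℝ) (φ : ℤ × ℤ → ℝ) (hφ : Memℓp φ 2)
    (hu2 : ∀ t : ℝ, 0 ≤ t → Memℓp (u t) 2)
    (hheat : ∀ p : ℤ × ℤ, ∀ t : ℝ, 0 ≤ t →
      HasDerivAt (fun s => u s p) (latLap (u t) p) t)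
    (hinit : u 0 = φ)
    (C₁ : ℝ) (hC₁ : ∀ v : ℤ × ℤ → ℝ, Memℓp v 2 →
      N12sq v ≤ C₁ * ∑' p : ℤ × ℤ, (v p) ^ 2) :
    ∀ t : ℝ, 0 ≤ t →
      (∑' p : ℤ × ℤ, (u t p) ^ 2) + (1 + t) * N12sq (u t) +
        (∫ τ in (0:ℝ)..t, N12sq (u τ)) +
        (∫ τ in (0:ℝ)..t, (1 + τ) * N22sq (u τ)) ≤
      (2 + C₁) * ∑' p : ℤ × ℤ, (φ p) ^ 2 := by
  intro t ht
  subst hinit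
  calc _ = 2 * (∑' p, u 0 p ^ 2) + N12sq (u 0) - ∑' p, u t p ^ 2 :=
        stmt12_general latDir u hu2 (fun p s hs => (hheat p s hs).hasDerivWithinAt) ht
    _ ≤ (2 + C₁) * ∑' p, u 0 p ^ 2 := by
        have hnonneg : 0 ≤ ∑' p, u t p ^ 2 := tsum_nonneg fun p => sq_nonneg (u t p)
        linarith [hC₁ (u 0) hφ]
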